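/- arXiv:2304.11254 — 4 statements merged into one kernel-verified Lean document; each statement's English description precedes it below -/
import Mathlib

section
/- Let n ≥ 2 be even, let p be a prime with p ≡ 1 (mod n), let a ∈ F_p be an element of multiplicative order n, and set A = {1, a, …, a^{n-1}}. Then the set of s ∈ F_p for which (A, sA) is a symmetric ideal PTE solution of size n over F_p (i.e., A and sA are disjoint multisets with ∑_{j=0}^{n-1} a^{jk} = ∑_{j=0}^{n-1} (s a^j)^k in F_p for all 1 ≤ k ≤ n-1, and A = -A and sA = -sA) contains s = 0 and has at least (p-1)/n elements. -/
/-!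
Since `a` is a primitive `n`-th root of unity, `A` is the root multiset of `X ^ n - 1` and `sA`
that of `X ^ n - s ^ n`. As `n` is even, these polynomials are invariant under `X ↦ -X`, so both
multisets are symmetric. Their `k`-th power sums vanish when `n ∤ k`, and they are disjoint exactly
when `s ^ n ≠ 1`. Hence precisely the `n` roots of unity in `A` are excluded as values of `s`.
-/

section Definitions

variable {R : Type*} [CommRing R]

/-- `A` and `B` form an ideal Prouhet–Tarry–Escott solution of size `n`: they are disjoint, and
their power sums of exponents `1, …, n - 1` agree. -/
structure IsIdealPTE (n : ℕ) (A B : Multiset R) : Prop where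
  card_left : A.card = n
  card_right : B.card = n
  disjoint : Disjoint A B
  sum_pow_eq : ∀ k : ℕ, 1 ≤ k → k ≤ n - 1 → (A.map (· ^ k)).sum = (B.map (· ^ k)).sum

/-- A symmetric ideal Prouhet–Tarry–Escott solution: both multisets are stable under negation,
the notion of symmetry appropriate to even `n`. -/
structure IsSymmetricIdealPTE (n : ℕ) (A B : Multiset R) : Prop extends IsIdealPTE n A B where
  neg_left : A.map (fun x => -x) = A
  neg_right : B.map (fun x => -x) = B

/-- The geometric progression `1, a, …, a ^ (n - 1)`, as a multiset. -/
def geomProgression (a : R) (n : ℕ) : Multiset R :=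
  (Multiset.range n).map (fun j => a ^ j)

/-- The scalars `s` for which a geometric progression and its dilate by `s` form a symmetric ideal
Prouhet–Tarry–Escott solution. -/
def symmetricDilations (a : R) (n : ℕ) : Set R :=
  {s | IsSymmetricIdealPTE n (geomProgression a n) ((geomProgression a n).map (fun x => s * x))}

theorem mem_symmetricDilations_iff {a s : R} {n : ℕ} :
    s ∈ symmetricDilations a n ↔
      Disjoint ((Multiset.range n).map (fun j => a ^ j))
          (((Multiset.range n).map (fun j => a ^ j)).map (fun x => s * x)) ∧
        (∀ k : ℕ, 1 ≤ k → k ≤ n - 1 →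
          ∑ j ∈ Finset.range n, a ^ (j * k) = ∑ j ∈ Finset.range n, (s * a ^ j) ^ k) ∧
        ((Multiset.range n).map (fun j => a ^ j)).map (fun x => -x)
          = (Multiset.range n).map (fun j => a ^ j) ∧
        (((Multiset.range n).map (fun j => a ^ j)).map (fun x => s * x)).map (fun x => -x)
          = ((Multiset.range n).map (fun j => a ^ j)).map (fun x => s * x) := by
  have sum_left (k : ℕ) : ((geomProgression a n).map (· ^ k)).sum =
      ∑ j ∈ Finset.range n, a ^ (j * k) := by
    simp only [geomProgression, Multiset.map_map, Function.comp_def, pow_mul]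
    rfl
  have sum_right (k : ℕ) : (((geomProgression a n).map (fun x => s * x)).map (· ^ k)).sum =
      ∑ j ∈ Finset.range n, (s * a ^ j) ^ k := by
    simp only [geomProgression, Multiset.map_map, Function.comp_def]
    rfl
  constructor
  · rintro ⟨⟨-, -, hdisj, hsum⟩, hneg, hneg'⟩
    exact ⟨hdisj, by simpa only [sum_left, sum_right] using hsum, hneg, hneg'⟩
  · rintro ⟨hdisj, hsum, hneg, hneg'⟩
    exact ⟨⟨by simp [geomProgression], by simp [geomProgression], hdisj,
      by simpa only [sum_left, sum_right] using hsum⟩, hneg, hneg'⟩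

end Definitions

section NthRoots

open Polynomial

variable {R : Type*} [CommRing R] [IsDomain R] {n : ℕ} {a : R}

theorem map_neg_nthRoots (heven : Even n) (c : R) :
    (nthRoots n c).map (fun x => -x) = nthRoots n c := by
  rw [nthRoots, ← roots_comp_neg_X, sub_comp, X_pow_comp, C_comp, heven.neg_pow]

theorem disjoint_nthRoots_pow_iff (hn : 0 < n) (s t : R) :
    Disjoint (nthRoots n (s ^ n)) (nthRoots n (t ^ n)) ↔ s ^ n ≠ t ^ n := by
  simp only [Multiset.disjoint_left, mem_nthRoots hn]
  exact ⟨fun h => h rfl, fun h x hs ht => h (hs.symm.trans ht)⟩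

theorem geom_sum_pow_eq_zero (ha : IsPrimitiveRoot a n) {k : ℕ} (hk : ¬n ∣ k) :
    ∑ j ∈ Finset.range n, (a ^ k) ^ j = 0 := by
  have hne : a ^ k - 1 ≠ 0 := sub_ne_zero_of_ne fun h => hk (ha.dvd_of_pow_eq_one k h)
  refine eq_zero_of_ne_zero_of_mul_left_eq_zero hne ?_
  rw [mul_geom_sum, pow_right_comm, ha.pow_eq_one, one_pow, sub_self]

theorem map_mul_geomProgression (ha : IsPrimitiveRoot a n) (s : R) :
    (geomProgression a n).map (fun x => s * x) = nthRoots n (s ^ n) := by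
  simp only [ha.nthRoots_eq rfl, geomProgression, Multiset.map_map, Function.comp_def, mul_comm]

theorem geomProgression_eq_nthRoots (ha : IsPrimitiveRoot a n) :
    geomProgression a n = nthRoots n (1 ^ n) := by
  simpa only [one_mul, Multiset.map_id'] using map_mul_geomProgression ha 1

theorem card_nthRoots_pow (ha : IsPrimitiveRoot a n) (s : R) :
    (nthRoots n (s ^ n)).card = n := by
  rw [ha.card_nthRoots, if_pos ⟨s, rfl⟩]

theorem sum_pow_nthRoots_pow_eq_zero (ha : IsPrimitiveRoot a n) (s : R) {k : ℕ} (hk : ¬n ∣ k) :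
    ((nthRoots n (s ^ n)).map (· ^ k)).sum = 0 := by
  calc ((nthRoots n (s ^ n)).map (· ^ k)).sum
      = ∑ j ∈ Finset.range n, (a ^ j * s) ^ k := by
        rw [ha.nthRoots_eq rfl, Multiset.map_map]
        rfl
    _ = (∑ j ∈ Finset.range n, (a ^ k) ^ j) * s ^ k := by
        simp only [mul_pow, pow_right_comm a _ k, Finset.sum_mul]
    _ = 0 := by rw [geom_sum_pow_eq_zero ha hk, zero_mul]

theorem isIdealPTE_nthRoots_pow_iff (hn : 0 < n) (ha : IsPrimitiveRoot a n) (s t : R) :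
    IsIdealPTE n (nthRoots n (s ^ n)) (nthRoots n (t ^ n)) ↔ s ^ n ≠ t ^ n := by
  refine ⟨fun h => (disjoint_nthRoots_pow_iff hn s t).1 h.disjoint, fun h =>
    ⟨card_nthRoots_pow ha s, card_nthRoots_pow ha t, (disjoint_nthRoots_pow_iff hn s t).2 h,
      fun k hk hkn => ?_⟩⟩
  have hndvd : ¬n ∣ k := Nat.not_dvd_of_pos_of_lt hk (by lia)
  rw [sum_pow_nthRoots_pow_eq_zero ha s hndvd, sum_pow_nthRoots_pow_eq_zero ha t hndvd]

theorem symmetricDilations_eq (hn : 0 < n) (heven : Even n) (ha : IsPrimitiveRoot a n) :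
    symmetricDilations a n = {s | s ^ n = 1}ᶜ := by
  ext s
  rw [symmetricDilations, Set.mem_ofPred_eq, map_mul_geomProgression ha,
    geomProgression_eq_nthRoots ha, Set.mem_compl_iff, Set.mem_ofPred_eq]
  refine ⟨fun h hs => ?_, fun hs => ?_⟩
  · exact (isIdealPTE_nthRoots_pow_iff hn ha 1 s).1 h.toIsIdealPTE (by rw [hs, one_pow])
  · exact ⟨(isIdealPTE_nthRoots_pow_iff hn ha 1 s).2 fun h => hs (by rw [← h, one_pow]),
      map_neg_nthRoots heven _, map_neg_nthRoots heven _⟩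

theorem ncard_setOf_pow_eq_one (hn : 0 < n) (ha : IsPrimitiveRoot a n) :
    {s : R | s ^ n = 1}.ncard = n := by
  have hroots : {s : R | s ^ n = 1} = nthRootsFinset n (1 : R) := by
    ext s
    simp [mem_nthRootsFinset hn]
  rw [hroots, Set.ncard_coe_finset, ha.card_nthRootsFinset]

end NthRoots

theorem sub_one_div_le_of_add_eq {m n q : ℕ} (hm : 0 < m) (hn : 0 < n) (hq : m + n = q) :
    (q - 1) / n ≤ m := by
  have : m + n ≤ n * m + 1 := by nlinarith
  exact Nat.div_le_of_le_mul (Nat.sub_le_of_le_add (hq ▸ this))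

theorem geometric_symmetric_ideal_PTE_even_general {R : Type*} [CommRing R] [IsDomain R] [Finite R]
    {n : ℕ} (hn : 0 < n) (heven : Even n) {a : R} (ha : IsPrimitiveRoot a n) :
    0 ∈ symmetricDilations a n ∧ (symmetricDilations a n).ncard + n = Nat.card R := by
  rw [symmetricDilations_eq hn heven ha]
  refine ⟨by simp [zero_pow hn.ne'], ?_⟩
  rw [← Set.ncard_add_ncard_compl {s : R | s ^ n = 1}, ncard_setOf_pow_eq_one hn ha, add_comm]

/-- Let `n ≥ 2` be even, `p ≡ 1 (mod n)` a prime, and let `a ∈ F_p` have multiplicative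
order `n`. Set `A = {1, a, …, a^(n-1)}`. Then the set of `s ∈ F_p` for which `(A, sA)`
is a symmetric ideal PTE solution of size `n` over `F_p` contains `s = 0` and has at
least `(p-1)/n` elements. -/
theorem geometric_symmetric_ideal_PTE_even (n : ℕ) (hn2 : 2 ≤ n) (heven : Even n)
    (p : ℕ) [hp : Fact p.Prime] (hcong : (p : ZMod n) = 1)
    (a : ZMod p) (ha : orderOf a = n) :
    0 ∈ {s : ZMod p |
        Disjoint ((Multiset.range n).map (fun j => a ^ j))
          (((Multiset.range n).map (fun j => a ^ j)).map (fun x => s * x)) ∧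
        (∀ k : ℕ, 1 ≤ k → k ≤ n - 1 →
          ∑ j ∈ Finset.range n, a ^ (j * k) = ∑ j ∈ Finset.range n, (s * a ^ j) ^ k) ∧
        ((Multiset.range n).map (fun j => a ^ j)).map (fun x => -x)
          = (Multiset.range n).map (fun j => a ^ j) ∧
        (((Multiset.range n).map (fun j => a ^ j)).map (fun x => s * x)).map (fun x => -x)
          = ((Multiset.range n).map (fun j => a ^ j)).map (fun x => s * x)} ∧
    (p - 1) / n ≤ {s : ZMod p |
        Disjoint ((Multiset.range n).map (fun j => a ^ j))
          (((Multiset.range n).map (fun j => a ^ j)).map (fun x => s * x)) ∧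
        (∀ k : ℕ, 1 ≤ k → k ≤ n - 1 →
          ∑ j ∈ Finset.range n, a ^ (j * k) = ∑ j ∈ Finset.range n, (s * a ^ j) ^ k) ∧
        ((Multiset.range n).map (fun j => a ^ j)).map (fun x => -x)
          = (Multiset.range n).map (fun j => a ^ j) ∧
        (((Multiset.range n).map (fun j => a ^ j)).map (fun x => s * x)).map (fun x => -x)
          = ((Multiset.range n).map (fun j => a ^ j)).map (fun x => s * x)}.ncard := by
  have hn : 0 < n := two_pos.trans_le hn2
  obtain ⟨hzero, hcard⟩ :=
    geometric_symmetric_ideal_PTE_even_general hn heven (ha ▸ IsPrimitiveRoot.orderOf a)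
  simp only [← mem_symmetricDilations_iff]
  exact ⟨hzero, sub_one_div_le_of_add_eq ((Set.ncard_pos).2 ⟨0, hzero⟩) hn
    (hcard.trans (Nat.card_zmod p))⟩
end

section
/- Let A = {a_1,…,a_n} and B = {b_1,…,b_n} be multisets of integers such that ∏_{i=1}^n (x - a_i) - ∏_{i=1}^n (x - b_i) is a nonzero constant C, and let p be a prime dividing C. Then the multisets of reductions modulo p are equal: {a_1 mod p, …, a_n mod p} = {b_1 mod p, …, b_n mod p} as multisets in F_p. -/
section Reduction

open Polynomial

variable {R S : Type*} [CommRing R] [CommRing S] [IsDomain S]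

theorem roots_map_multiset_prod_X_sub_C (φ : R →+* S) (s : Multiset R) :
    ((s.map fun a => X - C a).prod.map φ).roots = s.map φ := by
  rw [Polynomial.map_multiset_prod, Multiset.map_map]
  simpa using roots_multiset_prod_X_sub_C (s.map φ)

theorem PTE_constant_prime_divisor_congruence_general (φ : R →+* S) {s t : Multiset R} {c : R}
    (h : (s.map fun a => X - C a).prod - (t.map fun b => X - C b).prod = C c) (hφc : φ c = 0) :
    s.map φ = t.map φ := by
  have map_eq : (s.map fun a => X - C a).prod.map φ = (t.map fun b => X - C b).prod.map φ := by
    rw [← sub_eq_zero, ← Polynomial.map_sub, h, map_C, hφc, C_0]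
  rw [← roots_map_multiset_prod_X_sub_C, map_eq, roots_map_multiset_prod_X_sub_C]

end Reduction

open Polynomial in
/-- If `∏ (x - aᵢ) - ∏ (x - bᵢ)` is a nonzero constant `C` and `p` is a prime dividing
`C`, then the multisets of reductions of the `aᵢ` and of the `bᵢ` modulo `p` coincide. -/
theorem PTE_constant_prime_divisor_congruence (n : ℕ) (a b : Fin n → ℤ) (c : ℤ)
    (hc : c ≠ 0)
    (h : (∏ i, (X - Polynomial.C (a i))) - (∏ i, (X - Polynomial.C (b i))) = Polynomial.C c)
    (p : ℕ) (hp : p.Prime) (hdvd : (p : ℤ) ∣ c) :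
    Multiset.map (fun i => ((a i : ZMod p))) Finset.univ.val
      = Multiset.map (fun i => ((b i : ZMod p))) Finset.univ.val := by
  have : Fact p.Prime := ⟨hp⟩
  simpa only [Multiset.map_map] using! PTE_constant_prime_divisor_congruence_general
    (Int.castRingHom (ZMod p)) (s := Finset.univ.val.map a) (t := Finset.univ.val.map b)
    (by simpa only [Multiset.map_map] using! h) ((ZMod.intCast_zmod_eq_zero_iff_dvd c p).2 hdvd)
end

section
/- For every ideal PTE solution (A, B) of size 10 over ℤ — that is, disjoint multisets A = {a_1,…,a_{10}} and B = {b_1,…,b_{10}} of integers with ∑ a_i^k = ∑ b_i^k for 1 ≤ k ≤ 9 — the prime 23 divides the constant C_{10}(A,B) = ∏_{i=1}^{10} (b_1 - a_i). -/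
/-!
Modulo `23` the polynomials `∏ (X - a i)` and `∏ (X - b i)` still differ by a constant `C`, by
Newton's identities, and `C = 0` as soon as some `a i` equals some `b j`. Suppose there is no such
pair. Then `a` and `b` together take at least `11` values: otherwise some product of fewer than `10`
factors `X - x` would vanish at all `b j` and at all but one value of `a`, against the equality of
power sums. So one of them, say `b`, takes at least `6` values, and these lie in a single level
set `S` of `x ↦ ∏ (x - a i)`. The polynomials `X ^ j * ∏ s ∈ S, (X - s)` of degree less than `10`
vanish at every `b j`, hence each of them has sum zero over `a`.

That this never happens is a finite computation over the possible `a`. An affine substitution makes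
`0` a value of maximal multiplicity and the word of multiplicities at `5 ^ 0, …, 5 ^ 21`
lexicographically maximal among its rotations, so that a necklace search suffices.
The level sets are read off from discrete logarithms: `log ∏ (5 ^ s - a i)` is essentially a
convolution of that word with the Zech logarithms, computed for all `s` at once as a product of two
integers (Kronecker substitution).
-/

open Finset

namespace PTE

section Multiplicity

variable {ι R : Type*} [Fintype ι] [DecidableEq R] {a : ι → R}

/-- The multiplicity of `x` in the multiset of values of `a`. -/
def mult (a : ι → R) (x : R) : ℕ := #{i | a i = x}

theorem mult_le_card (x : R) : mult a x ≤ Fintype.card ι :=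
  card_filter_le _ _

theorem mult_pos_iff {x : R} : 0 < mult a x ↔ ∃ i, a i = x := by
  simp [mult, filter_nonempty_iff]

theorem mult_eq_zero_iff {x : R} : mult a x = 0 ↔ ∀ i, a i ≠ x := by
  simp [mult, filter_eq_empty_iff]

theorem mult_comp_apply {S : Type*} [DecidableEq S] {f : R → S} (hf : f.Injective) (a : ι → R)
    (x : R) : mult (fun i => f (a i)) (f x) = mult a x := by
  simp only [mult, hf.eq_iff]

variable [Fintype R]

theorem prod_comp_eq_prod_pow_mult {M : Type*} [CommMonoid M] (φ : R → M) :
    ∏ i, φ (a i) = ∏ x, φ x ^ mult a x := by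
  simp [mult, ← prod_fiberwise' univ a φ]

theorem sum_comp_eq_sum_mult_nsmul {M : Type*} [AddCommMonoid M] (φ : R → M) :
    ∑ i, φ (a i) = ∑ x, mult a x • φ x := by
  simp [mult, ← sum_fiberwise' univ a φ]

end Multiplicity

section Algebra

variable {ι R : Type*} [Fintype ι] [CommRing R]

/-- The power sum conditions of an ideal Prouhet–Tarry–Escott solution; disjointness is kept
separate. -/
def IsIdealPTE (a b : ι → R) : Prop :=
  ∀ k, 1 ≤ k → k < Fintype.card ι → ∑ i, a i ^ k = ∑ i, b i ^ k

variable {a b : ι → R}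

theorem IsIdealPTE.symm (h : IsIdealPTE a b) : IsIdealPTE b a :=
  fun k hk hkn => (h k hk hkn).symm

theorem IsIdealPTE.sum_eval_eq (h : IsIdealPTE a b) {P : Polynomial R}
    (hP : P.natDegree < Fintype.card ι) : ∑ i, P.eval (a i) = ∑ i, P.eval (b i) := by
  have expand (c : ι → R) :
      ∑ i, P.eval (c i) = ∑ k ∈ range (Fintype.card ι), P.coeff k * ∑ i, c i ^ k := by
    simp only [Polynomial.eval_eq_sum_range' hP, mul_sum]
    exact sum_comm
  rw [expand, expand]
  refine sum_congr rfl fun k hk => ?_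
  obtain rfl | hk0 := k.eq_zero_or_pos
  · simp
  · rw [h k hk0 (mem_range.mp hk)]

theorem IsIdealPTE.affine (h : IsIdealPTE a b) (u v : R) :
    IsIdealPTE (fun i => u * a i + v) fun i => u * b i + v := by
  intro k _ hkn
  let P : Polynomial R := (Polynomial.C u * Polynomial.X + Polynomial.C v) ^ k
  have hP : P.natDegree < Fintype.card ι :=
    (Polynomial.natDegree_pow_le_of_le k Polynomial.natDegree_linear_le).trans_lt (by omega)
  simpa [P] using h.sum_eval_eq hP

theorem natCast_ne_zero_of_factorial_ne_zero {n : ℕ} (hn : (n.factorial : R) ≠ 0) {k : ℕ}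
    (hk : 0 < k) (hkn : k ≤ n) : (k : R) ≠ 0 := fun h0 =>
  hn (zero_dvd_iff.mp (h0 ▸ Nat.cast_dvd_cast (Nat.dvd_factorial hk hkn)))

theorem prod_sub_eq_sum_esymm (c : ι → R) (x : R) :
    ∏ i, (x - c i) = ∑ k ∈ range (Fintype.card ι + 1),
      (-1) ^ k * (MvPolynomial.aeval c (MvPolynomial.esymm ι R k) * x ^ (Fintype.card ι - k)) := by
  have vieta := congrArg (Polynomial.eval x)
    (Multiset.prod_X_sub_X_eq_sum_esymm (univ.val.map c))
  simp only [MvPolynomial.aeval_esymm_eq_multiset_esymm]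
  simpa [Polynomial.eval_finsetSum, Polynomial.eval_prod] using vieta

variable [IsDomain R]

theorem IsIdealPTE.esymm_eq (hR : ((Fintype.card ι).factorial : R) ≠ 0) (h : IsIdealPTE a b) :
    ∀ k < Fintype.card ι, MvPolynomial.aeval a (MvPolynomial.esymm ι R k) =
      MvPolynomial.aeval b (MvPolynomial.esymm ι R k) := by
  intro k
  induction k using Nat.strong_induction_on with
  | _ k ih =>
    intro hk
    obtain rfl | hk0 := k.eq_zero_or_pos
    · simp
    have newton (c : ι → R) := congrArg (MvPolynomial.aeval c) (MvPolynomial.mul_esymm_eq_sum ι R k)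
    simp only [map_mul, map_sum, map_pow, map_neg, map_one, map_natCast] at newton
    refine mul_left_cancel₀ (natCast_ne_zero_of_factorial_ne_zero hR hk0 hk.le) ?_
    rw [newton a, newton b]
    refine congrArg _ (sum_congr rfl fun x hx => ?_)
    obtain ⟨hsum, hlt⟩ : x.1 + x.2 = k ∧ x.1 < k := by simpa using hx
    rw [ih x.1 hlt (hlt.trans hk)]
    simp only [MvPolynomial.psum, map_sum, map_pow, MvPolynomial.aeval_X]
    rw [h x.2 (by omega) (by omega)]

theorem IsIdealPTE.exists_prod_sub_eq (hR : ((Fintype.card ι).factorial : R) ≠ 0)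
    (h : IsIdealPTE a b) : ∃ C, ∀ x, ∏ i, (x - a i) = ∏ i, (x - b i) + C := by
  refine ⟨(-1) ^ Fintype.card ι * (MvPolynomial.aeval a (MvPolynomial.esymm ι R (Fintype.card ι)) -
    MvPolynomial.aeval b (MvPolynomial.esymm ι R (Fintype.card ι))), fun x => ?_⟩
  rw [prod_sub_eq_sum_esymm, prod_sub_eq_sum_esymm, sum_range_succ, sum_range_succ,
    sum_congr rfl fun k hk => by rw [h.esymm_eq hR k (mem_range.mp hk)]]
  simp only [Nat.sub_self, pow_zero, mul_one]
  ring

theorem IsIdealPTE.exists_prod_eq (hR : ((Fintype.card ι).factorial : R) ≠ 0)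
    (h : IsIdealPTE a b) : ∃ C, ∀ j, ∏ i, (b j - a i) = C := by
  obtain ⟨C, hC⟩ := h.exists_prod_sub_eq hR
  refine ⟨C, fun j => ?_⟩
  rw [hC, prod_eq_zero (mem_univ j) (sub_self _), zero_add]

theorem IsIdealPTE.card_lt_card_image_add [DecidableEq R] [Nonempty ι]
    (hR : ((Fintype.card ι).factorial : R) ≠ 0) (h : IsIdealPTE a b) (hab : ∀ i j, a i ≠ b j) :
    Fintype.card ι < #(univ.image a) + #(univ.image b) := by
  by_contra! hle
  obtain ⟨i₀⟩ := ‹Nonempty ι›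
  set U := (univ.image a ∪ univ.image b).erase (a i₀) with hU
  have hUcard : #U < Fintype.card ι := by
    have hmem : a i₀ ∈ univ.image a ∪ univ.image b := by simp
    exact (card_erase_lt_of_mem hmem).trans_le ((card_union_le _ _).trans hle)
  have hsum := h.sum_eval_eq (P := ∏ x ∈ U, (Polynomial.X - Polynomial.C x))
    (by rwa [Polynomial.natDegree_finsetProd_X_sub_C_eq_card])
  simp only [Polynomial.eval_prod, Polynomial.eval_sub, Polynomial.eval_X, Polynomial.eval_C]
    at hsum
  have hB : ∑ i, ∏ x ∈ U, (b i - x) = 0 := sum_eq_zero fun j _ =>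
    prod_eq_zero (i := b j) (by simp [hU, (hab i₀ j).symm]) (sub_self _)
  have hA : ∑ i, ∏ x ∈ U, (a i - x) = mult a (a i₀) * ∏ x ∈ U, (a i₀ - x) := by
    rw [mult, ← nsmul_eq_mul, ← sum_const, sum_filter]
    refine sum_congr rfl fun i _ => ?_
    split_ifs with hi
    · rw [hi]
    · exact prod_eq_zero (i := a i) (by simp [hU, hi]) (sub_self _)
  rw [hB, hA] at hsum
  refine mul_ne_zero ?_ ?_ hsum
  · exact natCast_ne_zero_of_factorial_ne_zero hR (mult_pos_iff.mpr ⟨i₀, rfl⟩) (mult_le_card _)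
  · exact prod_ne_zero_iff.mpr fun x hx => sub_ne_zero.mpr (ne_of_mem_erase hx).symm

end Algebra

section Packing

theorem eval_div_pow_mod (P : Polynomial ℕ) {B : ℕ} (hP : ∀ k, P.coeff k < B) (k : ℕ) :
    P.eval B / B ^ k % B = P.coeff k := by
  induction k generalizing P with
  | zero =>
    rw [pow_zero, Nat.div_one, ← Polynomial.divX_mul_X_add P]
    simp [Nat.mod_eq_of_lt (hP 0)]
  | succ k ih =>
    have hB : 0 < B := (Nat.zero_le _).trans_lt (hP 0)
    have hdiv : P.eval B / B = P.divX.eval B := by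
      conv_lhs => rw [← Polynomial.divX_mul_X_add P]
      simp [Nat.add_div_of_dvd_right, Nat.div_eq_of_lt (hP 0), hB]
    rw [pow_succ', ← Nat.div_div_eq_div_mul, hdiv,
      ih P.divX fun j => by rw [Polynomial.coeff_divX]; exact hP _, Polynomial.coeff_divX]

/-- The polynomial with coefficients `w 0, …, w (n - 1)`, the generating function of a word. -/
noncomputable def wordPoly (w : ℕ → ℕ) (n : ℕ) : Polynomial ℕ :=
  ∑ t ∈ range n, Polynomial.monomial t (w t)

theorem coeff_wordPoly (w : ℕ → ℕ) (n k : ℕ) :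
    (wordPoly w n).coeff k = if k < n then w k else 0 := by
  simp [wordPoly, Polynomial.finsetSum_coeff, Polynomial.coeff_monomial]

theorem eval_wordPoly (w : ℕ → ℕ) (n B : ℕ) :
    (wordPoly w n).eval B = ∑ t ∈ range n, w t * B ^ t := by
  simp [wordPoly, Polynomial.eval_finsetSum]

theorem sum_mul_pow_div_pow_mod {w : ℕ → ℕ} {B n k : ℕ} (hw : ∀ t, w t < B) (hk : k < n) :
    (∑ t ∈ range n, w t * B ^ t) / B ^ k % B = w k := by
  rw [← eval_wordPoly, eval_div_pow_mod, coeff_wordPoly, if_pos hk]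
  intro t
  rw [coeff_wordPoly]
  exact (ite_le_sup _ _ _).trans_lt (max_lt (hw t) ((Nat.zero_le _).trans_lt (hw t)))

end Packing

section Fold

/-- The right fold `op (f (n - 1)) (… (op (f 0) e))`. It is the loop of the computation below, which
is written with recursors and with functions such as `Nat.add` instead of the operators because this
is what the kernel evaluates fastest. -/
noncomputable def foldBelow {α : Type*} (op : α → α → α) (e : α) (f : ℕ → α) (n : ℕ) : α :=
  Nat.rec e (fun k acc => op (f k) acc) n

theorem foldBelow_and (f : ℕ → Bool) (n : ℕ) :
    foldBelow and true f n = true ↔ ∀ k < n, f k = true := by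
  induction n with
  | zero => simp [foldBelow]
  | succ n ih =>
    rw [Nat.forall_lt_succ_right, ← ih, and_comm, ← Bool.and_eq_true_iff]
    rfl

theorem foldBelow_add (f : ℕ → ℕ) (n : ℕ) :
    foldBelow Nat.add 0 f n = ∑ k ∈ range n, f k := by
  induction n with
  | zero => rfl
  | succ n ih =>
    rw [sum_range_succ_comm, ← ih]
    rfl

theorem foldBelow_mul (f : ℕ → ℕ) (n : ℕ) :
    foldBelow Nat.mul 1 f n = ∏ k ∈ range n, f k := by
  induction n with
  | zero => rfl
  | succ n ih =>
    rw [prod_range_succ_comm, ← ih]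
    rfl

end Fold

section Search

/-- The word `w 0, …, w (n - 1)` as a single number. The base `264 = 22 * 12` leaves room for the
coefficients of `logPoly` and lets them be reduced modulo `22` in place. -/
def encode (w : ℕ → ℕ) (n : ℕ) : ℕ := ∑ t ∈ range n, w t * 264 ^ t

/-- The residue modulo `22` of the base-`264` digit of `V` at position `k`. -/
def digit (V k : ℕ) : ℕ := Nat.mod (Nat.div V (Nat.pow 264 k)) 22

theorem digit_lt (V k : ℕ) : digit V k < 22 := Nat.mod_lt _ (by norm_num)

theorem digit_eq_mod_mod (V k : ℕ) : digit V k = V / 264 ^ k % 264 % 22 :=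
  (Nat.mod_mod_of_dvd _ (by norm_num)).symm

theorem digit_eval {P : Polynomial ℕ} (hP : ∀ k, P.coeff k < 264) (k : ℕ) :
    digit (P.eval 264) k = P.coeff k % 22 := by
  rw [digit_eq_mod_mod]
  exact congrArg (· % 22) (eval_div_pow_mod P hP k)

theorem digit_encode {w : ℕ → ℕ} (hw : ∀ t, w t < 22) {n t : ℕ} (ht : t < n) :
    digit (encode w n) t = w t := by
  rw [digit_eq_mod_mod, encode,
    sum_mul_pow_div_pow_mod (fun t => (hw t).trans (by norm_num)) ht, Nat.mod_eq_of_lt (hw t)]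

/-- Whether `test` holds for all extensions by `n` letters of sum `r` of the word encoded by `W`
in which no suffix is lexicographically larger than the whole word. Here `q = 264 ^ k`
for the length `k` of the word, and `d = 264 ^ i` where `i` is the length of its longest border,
that is, of its longest proper suffix which is also a prefix: maximality bounds the next letter by
the letter at position `i`. -/
noncomputable def search (test : ℕ → Bool) (n : ℕ) : ℕ → ℕ → ℕ → ℕ → Bool :=
  Nat.rec (fun r _ _ W => !Nat.beq r 0 || test W) (fun _ ih r d q W =>
    bif Nat.beq r 0 then test W else
      foldBelow and true (fun m => ih (Nat.sub r m)
        (bif Nat.beq m (Nat.mod (Nat.div W d) 22) then Nat.mul d 264 else 1)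
        (Nat.mul q 264) (Nat.add W (Nat.mul m q)))
        (Nat.succ (Nat.sub r (Nat.sub r (Nat.mod (Nat.div W d) 22))))) n

/-- No shift of the infinite word `w` is lexicographically larger than `w`. -/
def IsLexMax (w : ℕ → ℕ) : Prop :=
  ∀ s i, (∀ j < i, w (s + j) = w j) → w (s + i) ≤ w i

theorem cond_beq {α : Type*} (k l : ℕ) (x y : α) :
    (bif Nat.beq k l then x else y) = if k = l then x else y := by
  simp only [Bool.cond_eq_ite, Nat.beq_eq]

theorem search_succ (test : ℕ → Bool) (n r d q W : ℕ) :
    search test (n + 1) r d q W = true ↔ if r = 0 then test W = true else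
      ∀ m ≤ min r (W / d % 22), search test n (r - m)
        (if m = W / d % 22 then d * 264 else 1) (q * 264) (W + m * q) = true := by
  have unfold_search : search test (n + 1) r d q W = bif Nat.beq r 0 then test W else
      foldBelow and true (fun m => search test n (r - m)
        (bif Nat.beq m (W / d % 22) then d * 264 else 1) (q * 264) (W + m * q))
        (r - (r - W / d % 22) + 1) := rfl
  have min_eq : r - (r - W / d % 22) = min r (W / d % 22) := by omega
  rw [unfold_search, min_eq, cond_beq, apply_ite (· = true)]
  simp only [foldBelow_and, cond_beq, Nat.lt_succ_iff]

theorem encode_succ (w : ℕ → ℕ) (t : ℕ) : encode w (t + 1) = encode w t + w t * 264 ^ t :=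
  sum_range_succ _ _

theorem encode_add_of_sum_eq_zero {w : ℕ → ℕ} {t n : ℕ} (h : ∑ k ∈ range n, w (t + k) = 0) :
    encode w (t + n) = encode w t := by
  simp only [sum_eq_zero_iff] at h
  rw [encode, sum_range_add, sum_eq_zero (s := range n) fun k hk => by rw [h k hk, zero_mul],
    add_zero, encode]

theorem test_encode_of_search {test : ℕ → Bool} {w : ℕ → ℕ} (hw : ∀ t, w t < 22)
    (hmax : IsLexMax w) {n s i r : ℕ} (hs : 0 < s) (hborder : ∀ j < i, w (s + j) = w j)
    (hr : ∑ k ∈ range n, w (s + i + k) = r)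
    (h : search test n r (264 ^ i) (264 ^ (s + i)) (encode w (s + i)) = true) :
    test (encode w (s + i + n)) = true := by
  induction n generalizing s i r with
  | zero => simpa [search, ← hr] using h
  | succ n ih =>
    obtain rfl | hr0 := r.eq_zero_or_pos
    · rw [encode_add_of_sum_eq_zero hr]
      exact h
    have hdigit : encode w (s + i) / 264 ^ i % 22 = w i := digit_encode hw (by omega)
    have hle : w (s + i) ≤ w i := hmax s i hborder
    have htail : ∑ k ∈ range n, w (s + i + 1 + k) = r - w (s + i) := by
      rw [← hr, sum_range_succ', add_zero, Nat.add_sub_cancel]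
      simp only [Nat.add_assoc, Nat.add_comm 1]
    have hler : w (s + i) ≤ r := by
      rw [← hr, sum_range_succ', add_zero]
      exact Nat.le_add_left _ _
    rw [search_succ, if_neg hr0.ne', hdigit] at h
    have hnext := h (w (s + i)) (le_min hler hle)
    rw [← encode_succ, ← pow_succ] at hnext
    rw [← add_assoc, Nat.add_right_comm]
    split_ifs at hnext with hi
    · rw [← pow_succ] at hnext
      exact ih hs (i := i + 1) (Nat.forall_lt_succ_right.mpr ⟨hborder, hi⟩) htail hnext
    · exact ih (s := s + i + 1) (i := 0) (by omega) (by simp) htail hnext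

end Search

section Logarithm

instance fact_prime_twentythree : Fact (Nat.Prime 23) := ⟨by norm_num⟩

theorem five_pow_twentytwo : (5 : ZMod 23) ^ 22 = 1 := by
  decide

/-- The base-`5` logarithm of `5 ^ n - 1` in `ZMod 23`, and the junk value `22` if `5 ^ n = 1`. -/
def zechLog (n : ℕ) : ℕ := (List.range 22).findIdx fun k => 5 ^ k % 23 == (5 ^ n + 22) % 23

theorem zechLog_le (n : ℕ) : zechLog n ≤ 22 := by
  simpa only [zechLog, List.length_range] using List.findIdx_le_length (xs := List.range 22)

theorem pow_zechLog :
    ∀ n < 44, (5 : ZMod 23) ^ n ≠ 1 → (5 : ZMod 23) ^ zechLog n = 5 ^ n - 1 := by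
  decide +kernel

theorem pow_five_injOn : ∀ s < 22, ∀ t < 22, (5 : ZMod 23) ^ s = 5 ^ t → s = t := by
  decide +kernel

theorem exists_pow_five_eq : ∀ x : ZMod 23, x ≠ 0 → ∃ s < 22, x = 5 ^ s := by
  decide +kernel

theorem mod_eq_of_pow_five_eq {m n : ℕ} (h : (5 : ZMod 23) ^ m = 5 ^ n) : m % 22 = n % 22 := by
  rw [pow_eq_pow_mod m five_pow_twentytwo, pow_eq_pow_mod n five_pow_twentytwo] at h
  exact pow_five_injOn _ (Nat.mod_lt _ (by norm_num)) _ (Nat.mod_lt _ (by norm_num)) h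

theorem pow_five_sub_pow_five {s t : ℕ} (hs : s < 22) (ht : t < 22) (hst : s ≠ t) :
    (5 : ZMod 23) ^ s - 5 ^ t = 5 ^ (t + zechLog (s + 22 - t)) := by
  have hmul : (5 : ZMod 23) ^ t * 5 ^ (s + 22 - t) = 5 ^ s := by
    rw [← pow_add, Nat.add_sub_cancel' (by omega), pow_add, five_pow_twentytwo, mul_one]
  have hne : (5 : ZMod 23) ^ (s + 22 - t) ≠ 1 := fun h =>
    hst (pow_five_injOn s hs t ht (by rw [← hmul, h, mul_one]))
  rw [pow_add, pow_zechLog _ (by omega) hne, mul_sub, hmul, mul_one]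

@[to_additive sum_univ_eq_add_sum_pow_five]
theorem prod_univ_eq_mul_prod_pow_five {M : Type*} [CommMonoid M] (φ : ZMod 23 → M) :
    ∏ x, φ x = φ 0 * ∏ t ∈ range 22, φ (5 ^ t) := by
  have huniv : (univ : Finset (ZMod 23)) = insert 0 ((range 22).image (5 ^ ·)) := by decide +kernel
  rw [huniv, prod_insert (by decide +kernel), prod_image fun s hs t ht =>
    pow_five_injOn s (by simpa using hs) t (by simpa using ht)]

variable {a : Fin 10 → ZMod 23}

/-- The periodic word of the multiplicities of `a` at the powers of `5`, which generates
`(ZMod 23)ˣ`. -/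
def word (a : Fin 10 → ZMod 23) (t : ℕ) : ℕ := mult a (5 ^ t)

theorem word_lt (t : ℕ) : word a t < 22 :=
  (mult_le_card _).trans_lt (by simp)

theorem sum_eval_eq_word (φ : ZMod 23 → ZMod 23) :
    ∑ i, φ (a i) = mult a 0 * φ 0 + ∑ t ∈ range 22, word a t * φ (5 ^ t) := by
  rw [sum_comp_eq_sum_mult_nsmul, sum_univ_eq_add_sum_pow_five]
  simp only [nsmul_eq_mul, word]

theorem mult_zero_add_sum_word (a : Fin 10 → ZMod 23) :
    mult a 0 + ∑ t ∈ range 22, word a t = 10 := by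
  have := sum_comp_eq_sum_mult_nsmul (a := a) fun _ => (1 : ℕ)
  rw [sum_univ_eq_add_sum_pow_five] at this
  simpa [word] using this.symm

/-- The polynomial whose coefficient at `s + 22` is `log ∏ i, (5 ^ s - a i)` modulo `22`, up to an
additive constant, when `M = mult a 0`, `w = word a` and `5 ^ s` is not a value of `a`. -/
noncomputable def logPoly (M : ℕ) (w : ℕ → ℕ) : Polynomial ℕ :=
  wordPoly w 22 * wordPoly zechLog 44 + Polynomial.C M * (wordPoly id 22 * Polynomial.X ^ 22)

theorem coeff_wordPoly_mul (w : ℕ → ℕ) (n : ℕ) (P : Polynomial ℕ) (k : ℕ) :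
    (wordPoly w n * P).coeff k =
      ∑ t ∈ range n, w t * if t ≤ k then P.coeff (k - t) else 0 := by
  simp only [wordPoly, sum_mul, Polynomial.finsetSum_coeff, ← Polynomial.C_mul_X_pow_eq_monomial,
    mul_assoc, Polynomial.coeff_C_mul, Polynomial.coeff_X_pow_mul']

theorem coeff_logPoly_lt {M : ℕ} {w : ℕ → ℕ} (h : M + ∑ t ∈ range 22, w t = 10) (k : ℕ) :
    (logPoly M w).coeff k < 264 := by
  have hzech : (wordPoly w 22 * wordPoly zechLog 44).coeff k ≤ (∑ t ∈ range 22, w t) * 22 := by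
    rw [coeff_wordPoly_mul, sum_mul]
    refine sum_le_sum fun t _ => Nat.mul_le_mul_left _ ?_
    rw [coeff_wordPoly]
    have := zechLog_le (k - t)
    split_ifs <;> omega
  have hid : (wordPoly id 22 * Polynomial.X ^ 22).coeff k ≤ 22 := by
    rw [Polynomial.coeff_mul_X_pow', coeff_wordPoly, id]
    split_ifs <;> omega
  rw [logPoly, Polynomial.coeff_add, Polynomial.coeff_C_mul]
  have := Nat.mul_le_mul_left M hid
  omega

theorem coeff_logPoly_add (M : ℕ) (w : ℕ → ℕ) {s : ℕ} (hs : s < 22) :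
    (logPoly M w).coeff (s + 22) = ∑ t ∈ range 22, w t * zechLog (s + 22 - t) + M * s := by
  rw [logPoly, Polynomial.coeff_add, Polynomial.coeff_C_mul, Polynomial.coeff_mul_X_pow,
    coeff_wordPoly, if_pos hs, coeff_wordPoly_mul, id, Nat.add_right_cancel_iff]
  refine sum_congr rfl fun t ht => ?_
  have := mem_range.mp ht
  rw [if_pos (by omega), coeff_wordPoly, if_pos (by omega)]

theorem prod_pow_five_sub {s : ℕ} (hs : s < 22) (hws : word a s = 0) :
    ∏ i, (5 ^ s - a i) = 5 ^ (∑ t ∈ range 22, word a t * t +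
      (logPoly (mult a 0) (word a)).coeff (s + 22)) := by
  rw [prod_comp_eq_prod_pow_mult fun x => 5 ^ s - x, prod_univ_eq_mul_prod_pow_five, sub_zero,
    coeff_logPoly_add _ _ hs, ← add_assoc, ← sum_add_distrib, pow_add, ← prod_pow_eq_pow_sum,
    mul_comm, ← pow_mul, mul_comm s]
  refine congrArg (· * _) (prod_congr rfl fun t ht => ?_)
  rw [← mul_add, mul_comm, pow_mul]
  obtain rfl | hst := eq_or_ne s t
  · rw [← word, hws, pow_zero, pow_zero]
  · rw [← pow_five_sub_pow_five hs (mem_range.mp ht) hst, word]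

end Logarithm

section Exclusion

/-- The table of `zechLog`, one base-`264` digit per entry. -/
noncomputable def zechTable : ℕ :=
  foldBelow Nat.add 0 (fun n => Nat.mul (zechLog n) (Nat.pow 264 n)) 44

/-- The table of the identity, aligned with `zechTable` in `logTable`. -/
noncomputable def idTable : ℕ :=
  foldBelow Nat.add 0 (fun n => Nat.mul n (Nat.pow 264 (Nat.add n 22))) 22

/-- The value at `264` of `logPoly M w`, where `W = encode w 22`. -/
noncomputable def logTable (M W : ℕ) : ℕ := Nat.add (Nat.mul W zechTable) (Nat.mul M idTable)

/-- The number of `s < 22` with `digit V (s + 22) = c`, as the base-`64` digit at `c`. -/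
noncomputable def histogram (V : ℕ) : ℕ :=
  foldBelow Nat.add 0 (fun s => Nat.pow 64 (digit V (Nat.add s 22))) 22

/-- The number with `22` base-`64` digits `1`. -/
noncomputable def repunit : ℕ := foldBelow Nat.add 0 (fun c => Nat.pow 64 c) 22

/-- Whether the base-`64` digits of `H`, assumed less than `38`, are all less than `6`: adding `26`
to each digit sets the bit of weight `32` of those which are not. -/
noncomputable def digitsLtSix (H : ℕ) : Bool :=
  Nat.beq (Nat.land (Nat.add H (Nat.mul 26 repunit)) (Nat.mul 32 repunit)) 0

/-- The number of elements of the subset `X` of `{0, …, 21}`. -/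
noncomputable def cardBelow (X : ℕ → Bool) : ℕ :=
  foldBelow Nat.add 0 (fun s => bif X s then 1 else 0) 22

/-- A representative of `∏ s ∈ X, (x - 5 ^ s)` modulo `23`, for a subset `X` of `{0, …, 21}`. -/
noncomputable def prodSub (X : ℕ → Bool) (x : ℕ) : ℕ :=
  foldBelow Nat.mul 1 (fun s => bif X s then Nat.add x (Nat.mul 22 (Nat.pow 5 s)) else 1) 22

/-- A representative of `∑ i, a i ^ j * ∏ s ∈ X, (a i - 5 ^ s)` modulo `23`, where `M = mult a 0`
and `W = encode (word a) 22`. -/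
noncomputable def moment (M W : ℕ) (X : ℕ → Bool) (j : ℕ) : ℕ :=
  Nat.add (Nat.mul M (Nat.mul (Nat.pow 0 j) (prodSub X 0)))
    (foldBelow Nat.add 0 (fun t => Nat.mul (digit W t)
      (Nat.mul (Nat.pow (Nat.pow 5 t) j) (prodSub X (Nat.pow 5 t)))) 22)

/-- Whether a nonzero `moment` of a polynomial of degree less than `10` shows that there is no `b`
with `IsIdealPTE a b` all of whose values are `5 ^ s` with `s ∈ X`. -/
noncomputable def excludesSupport (M W : ℕ) (X : ℕ → Bool) : Bool :=
  !foldBelow and true (fun j => Nat.ble 10 (Nat.add j (cardBelow X)) ||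
    Nat.beq (Nat.mod (moment M W X j) 23) 0) 10

/-- Whether every level set of `s ↦ ∏ i, (5 ^ s - a i)`, without the values of `a`, has fewer
than `6` elements or is ruled out by `excludesSupport`. -/
noncomputable def excludes (M W : ℕ) : Bool :=
  digitsLtSix (histogram (logTable M W)) || foldBelow and true (fun c =>
    Nat.ble (Nat.mod (Nat.div (histogram (logTable M W)) (Nat.pow 64 c)) 64) 5 ||
      excludesSupport M W fun s =>
        Nat.beq (digit (logTable M W) (Nat.add s 22)) c && Nat.beq (digit W s) 0) 22

theorem logTable_encode (M : ℕ) (w : ℕ → ℕ) :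
    logTable M (encode w 22) = (logPoly M w).eval 264 := by
  have hzech : zechTable = (wordPoly zechLog 44).eval 264 := by
    rw [eval_wordPoly]
    exact foldBelow_add _ _
  have hid : idTable = (wordPoly id 22 * Polynomial.X ^ 22).eval 264 := by
    simp only [Polynomial.eval_mul, Polynomial.eval_pow, Polynomial.eval_X, eval_wordPoly, sum_mul,
      mul_assoc, ← pow_add]
    exact foldBelow_add _ _
  rw [logPoly, Polynomial.eval_add, Polynomial.eval_mul, Polynomial.eval_C_mul, ← hzech, ← hid,
    eval_wordPoly]
  rfl

/-- The number of positions `s < 22` at which the upper half of `V` has the digit `c`. -/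
def levelCard (V c : ℕ) : ℕ := #{s ∈ range 22 | digit V (s + 22) = c}

theorem levelCard_le (V c : ℕ) : levelCard V c ≤ 22 :=
  (card_filter_le _ _).trans_eq (card_range 22)

theorem histogram_eq_sum (V : ℕ) : histogram V = ∑ c ∈ range 22, levelCard V c * 64 ^ c := by
  refine (foldBelow_add _ _).trans ?_
  rw [← sum_fiberwise_of_maps_to fun s _ => mem_range.mpr (digit_lt V (s + 22))]
  refine sum_congr rfl fun c _ => ?_
  rw [levelCard, ← smul_eq_mul, ← sum_const]
  exact sum_congr rfl fun s hs => congrArg (64 ^ ·) (mem_filter.mp hs).2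

theorem histogram_digit (V : ℕ) {c : ℕ} (hc : c < 22) :
    histogram V / 64 ^ c % 64 = levelCard V c := by
  rw [histogram_eq_sum, sum_mul_pow_div_pow_mod
    (fun t => (levelCard_le V t).trans_lt (by norm_num)) hc]

theorem repunit_eq_sum : repunit = ∑ c ∈ range 22, 64 ^ c := foldBelow_add _ _

theorem testBit_six_mul_add_five (n c : ℕ) :
    n.testBit (6 * c + 5) = decide (32 ≤ n / 64 ^ c % 64) := by
  rw [Nat.testBit_eq_decide_div_mod_eq, pow_add, pow_mul, ← Nat.div_div_eq_div_mul,
    decide_eq_decide]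
  generalize n / (2 ^ 6) ^ c = m
  norm_num
  omega

theorem levelCard_lt_six {V : ℕ} (h : digitsLtSix (histogram V) = true) {c : ℕ} (hc : c < 22) :
    levelCard V c < 6 := by
  have hand : (histogram V + 26 * repunit) &&& (32 * repunit) = 0 := Nat.eq_of_beq_eq_true h
  rw [histogram_eq_sum, repunit_eq_sum, mul_sum, mul_sum, ← sum_add_distrib] at hand
  simp only [← add_mul] at hand
  have hbit := congrArg (Nat.testBit · (6 * c + 5)) hand
  beta_reduce at hbit
  rw [Nat.zero_testBit, Nat.testBit_and, testBit_six_mul_add_five, testBit_six_mul_add_five,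
    sum_mul_pow_div_pow_mod (fun t => by have := levelCard_le V t; omega) hc,
    sum_mul_pow_div_pow_mod (fun _ => by norm_num) hc] at hbit
  have : ¬32 ≤ levelCard V c + 26 := by simpa using hbit
  omega

theorem cardBelow_eq (X : ℕ → Bool) : cardBelow X = #{s ∈ range 22 | X s} := by
  rw [card_filter]
  simp only [← Bool.cond_eq_ite]
  exact foldBelow_add _ _

theorem natCast_prodSub (X : ℕ → Bool) (x : ℕ) :
    (prodSub X x : ZMod 23) = ∏ s ∈ range 22 with X s, ((x : ZMod 23) - 5 ^ s) := by
  have hprod : prodSub X x = ∏ s ∈ range 22, bif X s then x + 22 * 5 ^ s else 1 :=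
    foldBelow_mul _ _
  have hneg : (22 : ZMod 23) = -1 := by decide
  rw [hprod, Nat.cast_prod, prod_filter]
  refine prod_congr rfl fun s _ => ?_
  cases X s
  · simp
  · simp [hneg, sub_eq_add_neg]

theorem natCast_moment (a : Fin 10 → ZMod 23) (X : ℕ → Bool) (j : ℕ) :
    (moment (mult a 0) (encode (word a) 22) X j : ZMod 23) =
      ∑ i, a i ^ j * ∏ s ∈ range 22 with X s, (a i - 5 ^ s) := by
  have hsum : moment (mult a 0) (encode (word a) 22) X j = mult a 0 * (0 ^ j * prodSub X 0) +
      ∑ t ∈ range 22, digit (encode (word a) 22) t * ((5 ^ t) ^ j * prodSub X (5 ^ t)) :=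
    congrArg (Nat.add _) (foldBelow_add _ _)
  rw [hsum, sum_eval_eq_word fun x => x ^ j * ∏ s ∈ range 22 with X s, (x - 5 ^ s)]
  push_cast [natCast_prodSub]
  refine congrArg _ (sum_congr rfl fun t ht => ?_)
  rw [digit_encode word_lt (mem_range.mp ht)]

theorem excludesSupport_eq_false {a b : Fin 10 → ZMod 23} (h : IsIdealPTE a b) {X : ℕ → Bool}
    (hX : ∀ j, ∃ s ∈ {s ∈ range 22 | X s}, b j = 5 ^ s) :
    excludesSupport (mult a 0) (encode (word a) 22) X = false := by
  rw [excludesSupport, Bool.not_eq_false', foldBelow_and]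
  intro j _
  rw [Bool.or_eq_true, Nat.ble_eq, Nat.beq_eq, cardBelow_eq, or_iff_not_imp_left, not_le]
  intro hdeg
  let P : Polynomial (ZMod 23) :=
    Polynomial.X ^ j * ∏ s ∈ range 22 with X s, (Polynomial.X - Polynomial.C (5 ^ s))
  have hP : P.natDegree < Fintype.card (Fin 10) := by
    have hprod := Polynomial.natDegree_finsetProd_X_sub_C_eq_card {s ∈ range 22 | X s}
      fun s => (5 : ZMod 23) ^ s
    have := Polynomial.natDegree_mul_le_of_le (Polynomial.natDegree_X_pow_le j) hprod.le
    exact this.trans_lt (by simpa using hdeg)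
  have hsum := h.sum_eval_eq hP
  simp only [P, Polynomial.eval_mul, Polynomial.eval_pow, Polynomial.eval_X, Polynomial.eval_prod,
    Polynomial.eval_sub, Polynomial.eval_C] at hsum
  rw [← natCast_moment, sum_eq_zero fun i _ => ?_, ZMod.natCast_eq_zero_iff] at hsum
  · generalize moment (mult a 0) (encode (word a) 22) X j = m at hsum ⊢
    exact Nat.mod_eq_zero_of_dvd hsum
  · obtain ⟨s, hs, hbs⟩ := hX i
    rw [prod_eq_zero hs (sub_eq_zero.mpr hbs), mul_zero]

theorem excludes_eq_false {a b : Fin 10 → ZMod 23} (h : IsIdealPTE a b) (hab : ∀ i j, a i ≠ b j)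
    (h0 : 0 < mult a 0) (hb : 6 ≤ #(univ.image b)) :
    excludes (mult a 0) (encode (word a) 22) = false := by
  obtain ⟨i₀, hi₀⟩ := mult_pos_iff.mp h0
  choose e he hbe using fun j => exists_pow_five_eq (b j) fun hj => hab i₀ j (hi₀.trans hj.symm)
  have hword (j) : word a (e j) = 0 :=
    mult_eq_zero_iff.mpr fun i hi => hab i j (hi.trans (hbe j).symm)
  set V := logTable (mult a 0) (encode (word a) 22) with hV
  have hlevel (j) : digit V (e j + 22) = digit V (e 0 + 22) := by
    obtain ⟨C, hC⟩ := h.exists_prod_eq (by decide)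
    have hlog := (hC j).trans (hC 0).symm
    rw [hbe j, hbe 0, prod_pow_five_sub (he j) (hword j), prod_pow_five_sub (he 0) (hword 0),
      pow_add, pow_add] at hlog
    rw [hV, logTable_encode, digit_eval (coeff_logPoly_lt (mult_zero_add_sum_word a)),
      digit_eval (coeff_logPoly_lt (mult_zero_add_sum_word a))]
    exact mod_eq_of_pow_five_eq (mul_left_cancel₀ (pow_ne_zero _ (by decide)) hlog)
  have hcard : 6 ≤ levelCard V (digit V (e 0 + 22)) := by
    refine hb.trans ((card_le_card fun x hx => ?_).trans (card_image_le (f := ((5 : ZMod 23) ^ ·))))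
    obtain ⟨j, rfl⟩ := mem_image_univ_iff_mem_range.mp hx
    rw [hbe j]
    exact mem_image_of_mem _ (by simpa using ⟨he j, hlevel j⟩)
  rw [excludes, Bool.or_eq_false_iff, ← hV, ← Bool.not_eq_true, ← Bool.not_eq_true, foldBelow_and]
  refine ⟨fun hlt => (levelCard_lt_six hlt (digit_lt _ _)).not_ge hcard, fun hall => ?_⟩
  specialize hall _ (digit_lt V (e 0 + 22))
  rw [Bool.or_eq_true, Nat.ble_eq] at hall
  refine hall.elim (fun hle => ?_) fun hsupp => ?_
  · exact absurd (hcard.trans ((histogram_digit V (digit_lt _ _)).symm.trans_le hle)) (by norm_num)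
  · rw [excludesSupport_eq_false h fun j => ⟨e j, ?_, hbe j⟩] at hsupp
    · exact Bool.false_ne_true hsupp
    · rw [mem_filter, Bool.and_eq_true, Nat.beq_eq, Nat.beq_eq]
      exact ⟨mem_range.mpr (he j), hlevel j, (digit_encode word_lt (he j)).trans (hword j)⟩

end Exclusion

section NormalForm

theorem exists_isLexMax_rotation {w : ℕ → ℕ} {n : ℕ} (hn : 0 < n) (hw : Function.Periodic w n) :
    ∃ r, IsLexMax fun t => w (r + t) := by
  let rotation (r : ℕ) : Lex (Fin n → ℕ) := toLex fun k => w (r + k)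
  obtain ⟨r, -, hr⟩ := exists_max_image (range n) rotation ⟨0, mem_range.mpr hn⟩
  refine ⟨r, fun s i heq => ?_⟩
  by_contra! hlt
  have hin : i < n := by
    by_contra! hni
    obtain ⟨i, rfl⟩ := Nat.exists_eq_add_of_le' hni
    have := heq i (by omega)
    simp only [← add_assoc, hw _] at hlt this
    exact hlt.ne' this
  have hmod (k : ℕ) : w ((r + s) % n + k) = w (r + (s + k)) := by
    rw [← hw.map_mod_nat, Nat.mod_add_mod, hw.map_mod_nat, add_assoc]
  exact (hr ((r + s) % n) (mem_range.mpr (Nat.mod_lt _ hn))).not_gt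
    ⟨⟨i, hin⟩, fun k hk => ((hmod k).trans (heq k hk)).symm, hlt.trans_eq (hmod i).symm⟩

theorem exists_affine_isLexMax (a : Fin 10 → ZMod 23) : ∃ u v, u ≠ 0 ∧
    (∀ x, mult (fun i => u * a i + v) x ≤ mult (fun i => u * a i + v) 0) ∧
    IsLexMax (word fun i => u * a i + v) := by
  obtain ⟨z, -, hz⟩ := exists_max_image univ (mult a) univ_nonempty
  obtain ⟨r, hr⟩ := exists_isLexMax_rotation (w := fun t => mult a (5 ^ t + z)) (n := 22)
    (by norm_num) fun t => by simp only [pow_add, five_pow_twentytwo, mul_one]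
  have h5 : (5 : ZMod 23) ^ r ≠ 0 := pow_ne_zero _ (by decide)
  have hmult (x : ZMod 23) :
      mult (fun i => (5 ^ r)⁻¹ * a i + -((5 ^ r)⁻¹ * z)) x = mult a (5 ^ r * x + z) := by
    refine .trans (congrArg _ ?_) (mult_comp_apply (f := fun y => (5 ^ r)⁻¹ * y + -((5 ^ r)⁻¹ * z))
      ((add_left_injective _).comp (mul_right_injective₀ (inv_ne_zero h5))) a _)
    simp [mul_add, h5]
  have hword : word (fun i => (5 ^ r)⁻¹ * a i + -((5 ^ r)⁻¹ * z)) =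
      fun t => mult a (5 ^ (r + t) + z) :=
    funext fun t => by rw [word, hmult, ← pow_add]
  refine ⟨(5 ^ r)⁻¹, -((5 ^ r)⁻¹ * z), inv_ne_zero h5, fun x => ?_, hword ▸ hr⟩
  simpa only [hmult, mul_zero, zero_add] using hz _ (mem_univ _)

end NormalForm

section Enumeration

/-- Whether `excludes M (encode w 22)` for all lexicographically maximal words `w` with letters at
most `M` and sum `10 - M`. -/
noncomputable def searchAll (M : ℕ) : Bool :=
  foldBelow and true (fun m => search (excludes M) 21 (Nat.sub (Nat.sub 10 M) m) 1 264 m)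
    (Nat.succ (min M (10 - M)))

theorem excludes_encode_of_searchAll {M : ℕ} (h : searchAll M = true) {w : ℕ → ℕ}
    (hw : ∀ t, w t < 22) (hmax : IsLexMax w) (h0 : w 0 ≤ M)
    (hsum : M + ∑ t ∈ range 22, w t = 10) : excludes M (encode w 22) = true := by
  rw [sum_range_succ'] at hsum
  have hsearch := (foldBelow_and _ _).mp h (w 0) (Nat.lt_succ_iff.mpr (le_min h0 (by omega)))
  refine test_encode_of_search (s := 1) (i := 0) (n := 21) hw hmax one_pos (by simp)
    (r := 10 - M - w 0) ?_ ?_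
  · simp only [add_comm 1]
    omega
  · rw [encode_succ]
    simpa [encode] using hsearch

set_option maxHeartbeats 4000000 in
-- The kernel runs the whole enumeration here, which takes a few minutes.
theorem searchAll_succ_eq_true : ∀ M < 10, searchAll (M + 1) = true := by
  decide +kernel

end Enumeration

section DistinctValues

variable {a b : Fin 10 → ZMod 23}

theorem IsIdealPTE.card_image_lt_six (h : IsIdealPTE a b) (hab : ∀ i j, a i ≠ b j) :
    #(univ.image b) < 6 := by
  by_contra! hb
  obtain ⟨u, v, hu, hmax, hlex⟩ := exists_affine_isLexMax a
  have hinj : Function.Injective fun x => u * x + v :=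
    (add_left_injective v).comp (mul_right_injective₀ hu)
  set a' := fun i => u * a i + v
  have h0 : 0 < mult a' 0 := (mult_pos_iff.mpr ⟨0, rfl⟩).trans_le (hmax (a' 0))
  have hsum := mult_zero_add_sum_word a'
  have hexcl : excludes (mult a' 0) (encode (word a') 22) = true := by
    obtain ⟨M, hM⟩ := Nat.exists_eq_add_of_lt h0
    refine excludes_encode_of_searchAll ?_ word_lt hlex (hmax _) hsum
    rw [hM, zero_add]
    exact searchAll_succ_eq_true M (by omega)
  have hb' : 6 ≤ #(univ.image fun i => u * b i + v) := by
    rw [← Function.comp_def (fun x => u * x + v) b, ← image_image, card_image_of_injective _ hinj]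
    exact hb
  rw [excludes_eq_false (h.affine u v) (fun i j hij => hab i j (hinj hij)) h0 hb'] at hexcl
  exact Bool.false_ne_true hexcl

theorem IsIdealPTE.exists_eq (h : IsIdealPTE a b) : ∃ i j, a i = b j := by
  by_contra! hab
  have ha := h.symm.card_image_lt_six fun j i => (hab i j).symm
  have hb := h.card_image_lt_six hab
  have := h.card_lt_card_image_add (by decide) hab
  rw [Fintype.card_fin] at this
  omega

end DistinctValues

end PTE

theorem twentythree_divides_C10_general (a b : Fin 10 → ℤ)
    (hmom : ∀ k : ℕ, 1 ≤ k → k ≤ 9 → ∑ i, a i ^ k ≡ ∑ i, b i ^ k [ZMOD 23]) (j : Fin 10) :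
    (23 : ℤ) ∣ ∏ i, (b j - a i) := by
  have h : PTE.IsIdealPTE (fun i => (a i : ZMod 23)) fun i => (b i : ZMod 23) := by
    intro k hk hk10
    rw [Fintype.card_fin] at hk10
    simpa using (ZMod.intCast_eq_intCast_iff _ _ 23).mpr (hmom k hk (by omega))
  obtain ⟨C, hC⟩ := h.exists_prod_eq (by decide)
  obtain ⟨i, j', hij⟩ := h.exists_eq
  have hzero : ∏ i, ((b j : ZMod 23) - a i) = 0 := by
    rw [hC j, ← hC j', prod_eq_zero (mem_univ i) (sub_eq_zero.mpr hij.symm)]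
  exact (ZMod.intCast_zmod_eq_zero_iff_dvd _ 23).mp (by exact_mod_cast hzero)

/-- For every ideal PTE solution `(A, B)` of size `10` over `ℤ`, the prime `23` divides
the constant `C₁₀(A,B) = ∏ᵢ (b₁ - aᵢ)`. -/
theorem twentythree_divides_C10 (a b : Fin 10 → ℤ)
    (hdisj : Disjoint (Multiset.map a Finset.univ.val) (Multiset.map b Finset.univ.val))
    (hmom : ∀ k : ℕ, 1 ≤ k → k ≤ 9 → ∑ i, (a i) ^ k = ∑ i, (b i) ^ k) :
    (23 : ℤ) ∣ ∏ i, (b 0 - a i) :=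
  twentythree_divides_C10_general a b (fun k hk hk9 => congrArg (· % 23) (hmom k hk hk9)) 0
end

section
/- Let ω = e^{2πi/3}, let ζ₆ = 1 + ω be a primitive sixth root of unity, and set A = ⋃_{j=0}^{5} ζ₆^j · {3, 2ω+9} and B = ⋃_{j=0}^{5} ζ₆^j · {2ω+11, 7ω+11}, each a set of 12 Eisenstein integers. Then (A, B) is a symmetric ideal PTE solution of size 12 over ℤ[ω]: A and B are disjoint, A = -A, B = -B, and ∑_{a∈A} a^k = ∑_{b∈B} b^k for every k with 1 ≤ k ≤ 11. -/
/-- `ω = e^{2πi/3}`. -/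
noncomputable def eisensteinOmega : ℂ := Complex.exp (2 * Real.pi * Complex.I / 3)

/-- With `ζ₆ = 1 + ω`, the set `A = ⋃_{j=0}^{5} ζ₆^j · {3, 2ω+9}` of 12 Eisenstein
integers. -/
noncomputable def eisensteinA12 : Multiset ℂ :=
  (Multiset.range 6).bind fun j =>
    {(1 + eisensteinOmega) ^ j * 3, (1 + eisensteinOmega) ^ j * (2 * eisensteinOmega + 9)}

/-- With `ζ₆ = 1 + ω`, the set `B = ⋃_{j=0}^{5} ζ₆^j · {2ω+11, 7ω+11}` of 12
Eisenstein integers. -/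
noncomputable def eisensteinB12 : Multiset ℂ :=
  (Multiset.range 6).bind fun j =>
    {(1 + eisensteinOmega) ^ j * (2 * eisensteinOmega + 11),
      (1 + eisensteinOmega) ^ j * (7 * eisensteinOmega + 11)}

/-!
Multiplication by `ζ₆` preserves both multisets, so `ζ₆ ^ 3 = -1` makes them symmetric, and the
`k`-th power sum of the orbit of `S` is `∑_{j < 6} ζ₆ ^ (j k)` times that of `S`. This factor
vanishes unless `6 ∣ k`, so for `1 ≤ k ≤ 11` everything reduces to the single identity
`3 ^ 6 + (2ω + 9) ^ 6 = (2ω + 11) ^ 6 + (7ω + 11) ^ 6`. The two orbits are disjoint because their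
elements have norms `9, 67` and `103, 93` respectively, the norm of `bω + a` being
`a ^ 2 - a b + b ^ 2`.
-/

section CyclicOrbit

variable {M : Type*}

/-- The multiset `⋃_{j < n} ζ ^ j · S`, counted with multiplicity. For `ζ` a root of unity of
order dividing `n`, it is the orbit of `S` under multiplication by the powers of `ζ`. -/
def cyclicOrbit [Monoid M] (ζ : M) (n : ℕ) (S : Multiset M) : Multiset M :=
  ∑ j ∈ Finset.range n, S.map (ζ ^ j * ·)

theorem map_cyclicOrbit [Monoid M] {N : Type*} (f : M → N) (ζ : M) (n : ℕ) (S : Multiset M) :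
    (cyclicOrbit ζ n S).map f = ∑ j ∈ Finset.range n, S.map fun s => f (ζ ^ j * s) := by
  simp only [cyclicOrbit, ← Multiset.coe_mapAddMonoidHom, map_sum]
  simp only [Multiset.coe_mapAddMonoidHom, Multiset.map_map, Function.comp_def]

theorem map_mul_left_cyclicOrbit [Monoid M] {ζ : M} {n : ℕ} (hζ : ζ ^ n = 1) (S : Multiset M) :
    (cyclicOrbit ζ n S).map (ζ * ·) = cyclicOrbit ζ n S := by
  have shift := (Finset.sum_range_succ' (fun j => S.map (ζ ^ j * ·)) n).symm.trans
    (Finset.sum_range_succ _ n)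
  simp only [hζ, pow_zero] at shift
  rw [map_cyclicOrbit]
  simpa only [← mul_assoc, ← pow_succ', cyclicOrbit] using add_right_cancel shift

theorem map_pow_mul_left_cyclicOrbit [Monoid M] {ζ : M} {n : ℕ} (hζ : ζ ^ n = 1)
    (S : Multiset M) (m : ℕ) :
    (cyclicOrbit ζ n S).map (ζ ^ m * ·) = cyclicOrbit ζ n S := by
  induction m with
  | zero => simp
  | succ m ih =>
    conv_rhs => rw [← ih, ← map_mul_left_cyclicOrbit hζ S]
    simp only [Multiset.map_map, Function.comp_def, pow_succ, mul_assoc]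

theorem map_mem_of_mem_cyclicOrbit [Monoid M] {N F : Type*} [Monoid N] [FunLike F M N]
    [MonoidHomClass F M N] (f : F) {ζ : M} (hζ : f ζ = 1) {n : ℕ} {S : Multiset M} {x : M}
    (hx : x ∈ cyclicOrbit ζ n S) : f x ∈ S.map f := by
  obtain ⟨j, -, hj⟩ := Multiset.mem_sum.mp hx
  obtain ⟨s, hs, rfl⟩ := Multiset.mem_map.mp hj
  simpa [hζ] using Multiset.mem_map_of_mem f hs

theorem disjoint_cyclicOrbit [Monoid M] {N F : Type*} [Monoid N] [FunLike F M N]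
    [MonoidHomClass F M N] (f : F) {ζ : M} (hζ : f ζ = 1) {S T : Multiset M}
    (hST : Disjoint (S.map f) (T.map f)) (m n : ℕ) :
    Disjoint (cyclicOrbit ζ m S) (cyclicOrbit ζ n T) :=
  Multiset.disjoint_left.mpr fun hS hT =>
    Multiset.disjoint_left.mp hST (map_mem_of_mem_cyclicOrbit f hζ hS)
      (map_mem_of_mem_cyclicOrbit f hζ hT)

theorem sum_map_pow_cyclicOrbit [CommSemiring M] (ζ : M) (n : ℕ) (S : Multiset M) (k : ℕ) :
    ((cyclicOrbit ζ n S).map (· ^ k)).sum =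
      (∑ j ∈ Finset.range n, (ζ ^ k) ^ j) * (S.map (· ^ k)).sum := by
  rw [map_cyclicOrbit, ← Multiset.coe_sumAddMonoidHom, map_sum, Finset.sum_mul]
  refine Finset.sum_congr rfl fun j _ => ?_
  simp only [Multiset.coe_sumAddMonoidHom, mul_pow, pow_right_comm ζ j k,
    Multiset.sum_map_mul_left]

end CyclicOrbit

section PrimitiveRoot

variable {R : Type*} [CommRing R] [NoZeroDivisors R] {ζ : R} {n : ℕ}

theorem map_neg_cyclicOrbit (hζ : IsPrimitiveRoot ζ n) (hn : n ≠ 0) (heven : Even n)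
    (S : Multiset R) :
    (cyclicOrbit ζ n S).map (fun x => -x) = cyclicOrbit ζ n S := by
  have half : ζ ^ (n / 2) = -1 :=
    (hζ.pow (Nat.pos_of_ne_zero hn)
      (Nat.div_mul_cancel heven.two_dvd).symm).eq_neg_one_of_two_right
  simpa only [half, neg_one_mul] using map_pow_mul_left_cyclicOrbit hζ.pow_eq_one S (n / 2)

theorem geom_sum_pow_eq_zero_of_not_dvd (hζ : IsPrimitiveRoot ζ n) {k : ℕ} (hk : ¬ n ∣ k) :
    ∑ j ∈ Finset.range n, (ζ ^ k) ^ j = 0 := by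
  have ne_one : ζ ^ k - 1 ≠ 0 := sub_ne_zero.mpr fun h => hk (hζ.dvd_of_pow_eq_one k h)
  refine eq_zero_of_ne_zero_of_mul_right_eq_zero ne_one ?_
  rw [geom_sum_mul, pow_right_comm, hζ.pow_eq_one, one_pow, sub_self]

theorem sum_map_pow_cyclicOrbit_eq (hζ : IsPrimitiveRoot ζ n) {S T : Multiset R} {k : ℕ}
    (hST : n ∣ k → (S.map (· ^ k)).sum = (T.map (· ^ k)).sum) :
    ((cyclicOrbit ζ n S).map (· ^ k)).sum = ((cyclicOrbit ζ n T).map (· ^ k)).sum := by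
  rw [sum_map_pow_cyclicOrbit, sum_map_pow_cyclicOrbit]
  by_cases hk : n ∣ k
  · rw [hST hk]
  · rw [geom_sum_pow_eq_zero_of_not_dvd hζ hk, zero_mul, zero_mul]

end PrimitiveRoot

section CubeRoot

variable {R : Type*} [CommRing R] {ω : R}

theorem sq_add_self_add_one_of_isPrimitiveRoot_three [IsDomain R] (hω : IsPrimitiveRoot ω 3) :
    ω ^ 2 + ω + 1 = 0 := by
  simpa [Polynomial.cyclotomic_three] using hω.isRoot_cyclotomic (by norm_num)

theorem isPrimitiveRoot_six_one_add [IsDomain R] [NeZero ((6 : ℕ) : R)]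
    (hω : IsPrimitiveRoot ω 3) : IsPrimitiveRoot (1 + ω) 6 := by
  rw [← Polynomial.isRoot_cyclotomic_iff, Polynomial.cyclotomic_six]
  simp only [Polynomial.IsRoot.def, Polynomial.eval_add, Polynomial.eval_sub,
    Polynomial.eval_pow, Polynomial.eval_X, Polynomial.eval_one]
  linear_combination sq_add_self_add_one_of_isPrimitiveRoot_three hω

theorem sum_pow_six_generators_eq (hω : ω ^ 2 + ω + 1 = 0) :
    3 ^ 6 + (2 * ω + 9) ^ 6 = (2 * ω + 11) ^ 6 + (7 * ω + 11) ^ 6 := by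
  have h₁ : (2 * ω + 9) ^ 6 = 332640 * ω + 252757 := by grind
  have h₂ : (2 * ω + 11) ^ 6 = 1081080 * ω + 1104013 := by grind
  have h₃ : (7 * ω + 11) ^ 6 = -748440 * ω - 850527 := by grind
  rw [h₁, h₂, h₃]
  ring

end CubeRoot

section ComplexNorm

theorem normSq_of_isPrimitiveRoot {ζ : ℂ} {n : ℕ} (hζ : IsPrimitiveRoot ζ n)
    (hn : n ≠ 0) : Complex.normSq ζ = 1 := by
  rw [Complex.normSq_eq_norm_sq, hζ.norm'_eq_one hn, one_pow]

theorem re_of_isPrimitiveRoot_three {ω : ℂ} (hω : IsPrimitiveRoot ω 3) : ω.re = -1 / 2 := by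
  -- Both `ω` and `1 + ω` lie on the unit circle, which determines `re ω`.
  have h := Complex.normSq_add 1 ω
  rw [normSq_of_isPrimitiveRoot (isPrimitiveRoot_six_one_add hω) (by norm_num),
    normSq_of_isPrimitiveRoot hω (by norm_num)] at h
  simp only [map_one, one_mul, Complex.conj_re] at h
  linarith

theorem normSq_ofReal_mul_add_ofReal {ω : ℂ} (hω : IsPrimitiveRoot ω 3) (a b : ℝ) :
    Complex.normSq (b * ω + a) = a ^ 2 - a * b + b ^ 2 := by
  rw [Complex.normSq_add, Complex.normSq_mul, normSq_of_isPrimitiveRoot hω (by norm_num)]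
  simp only [Complex.normSq_ofReal, Complex.conj_ofReal, mul_assoc, Complex.re_ofReal_mul,
    Complex.re_mul_ofReal, re_of_isPrimitiveRoot_three hω]
  ring

end ComplexNorm

theorem isPrimitiveRoot_eisensteinOmega : IsPrimitiveRoot eisensteinOmega 3 :=
  Complex.isPrimitiveRoot_exp 3 (by norm_num)

theorem eisensteinA12_eq_cyclicOrbit :
    eisensteinA12 = cyclicOrbit (1 + eisensteinOmega) 6 {3, 2 * eisensteinOmega + 9} := rfl

theorem eisensteinB12_eq_cyclicOrbit : eisensteinB12 =
    cyclicOrbit (1 + eisensteinOmega) 6 {2 * eisensteinOmega + 11, 7 * eisensteinOmega + 11} :=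
  rfl

theorem disjoint_map_normSq_generators {ω : ℂ} (hω : IsPrimitiveRoot ω 3) :
    Disjoint (({3, 2 * ω + 9} : Multiset ℂ).map Complex.normSq)
      (({2 * ω + 11, 7 * ω + 11} : Multiset ℂ).map Complex.normSq) := by
  have h₁ : Complex.normSq 3 = 9 := by norm_num [Complex.normSq_ofNat]
  have h₂ : Complex.normSq (2 * ω + 9) = 67 := by
    simpa using (normSq_ofReal_mul_add_ofReal hω 9 2).trans (by norm_num)
  have h₃ : Complex.normSq (2 * ω + 11) = 103 := by
    simpa using (normSq_ofReal_mul_add_ofReal hω 11 2).trans (by norm_num)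
  have h₄ : Complex.normSq (7 * ω + 11) = 93 := by
    simpa using (normSq_ofReal_mul_add_ofReal hω 11 7).trans (by norm_num)
  simp [h₁, h₂, h₃, h₄]

/-- The symmetric ideal PTE solution of size `12` over the Eisenstein integers:
`A = ⋃ ζ₆^j·{3, 2ω+9}` and `B = ⋃ ζ₆^j·{2ω+11, 7ω+11}` are disjoint, `A = -A`,
`B = -B`, and their `k`-th moments agree for `1 ≤ k ≤ 11`. -/
theorem eisenstein_size12_solution :
    Disjoint eisensteinA12 eisensteinB12 ∧
    eisensteinA12.map (fun z => -z) = eisensteinA12 ∧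
    eisensteinB12.map (fun z => -z) = eisensteinB12 ∧
    ∀ k : ℕ, 1 ≤ k → k ≤ 11 →
      (eisensteinA12.map (fun z => z ^ k)).sum = (eisensteinB12.map (fun z => z ^ k)).sum := by
  have hω := isPrimitiveRoot_eisensteinOmega
  have hζ := isPrimitiveRoot_six_one_add hω
  rw [eisensteinA12_eq_cyclicOrbit, eisensteinB12_eq_cyclicOrbit]
  refine ⟨disjoint_cyclicOrbit Complex.normSq
      (normSq_of_isPrimitiveRoot hζ (by norm_num)) (disjoint_map_normSq_generators hω) 6 6,
    map_neg_cyclicOrbit hζ (by norm_num) (by decide) _,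
    map_neg_cyclicOrbit hζ (by norm_num) (by decide) _, fun k hk_pos hk_le => ?_⟩
  refine sum_map_pow_cyclicOrbit_eq hζ fun hk => ?_
  obtain rfl : k = 6 := by omega
  simpa using sum_pow_six_generators_eq (sq_add_self_add_one_of_isPrimitiveRoot_three hω)
end
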